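/- Let θ_j ∈ (0,1/2) for j ≥ 0, let S be a set of nonnegative integers and let g^{(1)} be the associated oscillating function. Then: (a) for every k ≥ 0, the average (1/Θ_k) ∫_{W_σ} g^{(1)} dx is the same for all white intervals W_σ of generation k; and (b) if k ∈ S and k+1 ∈ S, then for every white interval W of generation k and every white interval W′ of generation k+1, | (1/Θ_k)∫_W g^{(1)} dx − (1/Θ_{k+1})∫_{W′} g^{(1)} dx | ≥ 2 (1−2θ_k)(1−2θ_{k+1}). -/

import Mathlib

open MeasureTheory

/-- `Θ_k = θ_0 θ_1 ⋯ θ_{k-1}`. -/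
noncomputable def Theta (θ : ℕ → ℝ) (k : ℕ) : ℝ := ∏ j ∈ Finset.range k, θ j

/-- Signs `±1` indexed by booleans. -/
def sgn (b : Bool) : ℝ := if b then 1 else -1

/-- Midpoint `m_σ = ∑_{j<k} σ_j (1-θ_j) Θ_j / 2` associated to a sign pattern `σ ∈ {−1,1}^k`. -/
noncomputable def cmid (θ : ℕ → ℝ) {k : ℕ} (σ : Fin k → Bool) : ℝ :=
  ∑ j : Fin k, sgn (σ j) * (1 - θ (j : ℕ)) * Theta θ (j : ℕ) / 2

/-- The white interval of generation `k`: closed interval of length `Θ_k` centered at `m_σ`. -/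
noncomputable def whiteInterval (θ : ℕ → ℝ) {k : ℕ} (σ : Fin k → Bool) : Set ℝ :=
  Set.Icc (cmid θ σ - Theta θ k / 2) (cmid θ σ + Theta θ k / 2)

/-- The black interval of generation `k`: open interval of length `(1-2θ_k) Θ_k`
centered at `m_σ`. -/
noncomputable def blackInterval (θ : ℕ → ℝ) {k : ℕ} (σ : Fin k → Bool) : Set ℝ :=
  Set.Ioo (cmid θ σ - (1 - 2 * θ k) * Theta θ k / 2)
    (cmid θ σ + (1 - 2 * θ k) * Theta θ k / 2)

/-- The oscillating function `g^{(1)} = ∑_{k∈S} (−1)^k ∑_σ 1_{B_σ}`. -/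
noncomputable def oscFun (θ : ℕ → ℝ) (S : Set ℕ) (x : ℝ) : ℝ :=
  ∑' k : ℕ, S.indicator
    (fun k => (-1 : ℝ) ^ k *
      ∑ σ : Fin k → Bool, (blackInterval θ σ).indicator 1 x) k

namespace OscAux

noncomputable def cM (θ : ℕ → ℝ) (s : ℕ → Bool) (k : ℕ) : ℝ :=
  ∑ i ∈ Finset.range k, sgn (s i) * (1 - θ i) * Theta θ i / 2

def extd {k : ℕ} (σ : Fin k → Bool) (i : ℕ) : Bool := if h : i < k then σ ⟨i, h⟩ else false

lemma cmid_eq (θ : ℕ → ℝ) {k : ℕ} (σ : Fin k → Bool) : cmid θ σ = cM θ (extd σ) k := by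
  unfold cmid cM
  rw [Finset.sum_range]
  refine Finset.sum_congr rfl fun i _ => ?_
  simp [extd]

lemma cM_congr (θ : ℕ → ℝ) {s t : ℕ → Bool} {k : ℕ} (h : ∀ i < k, s i = t i) :
    cM θ s k = cM θ t k := by
  refine Finset.sum_congr rfl fun i hi => ?_
  rw [h i (Finset.mem_range.1 hi)]

lemma Theta_succ (θ : ℕ → ℝ) (k : ℕ) : Theta θ (k + 1) = Theta θ k * θ k :=
  Finset.prod_range_succ _ _

section
variable {θ : ℕ → ℝ}

lemma Theta_pos (hθ : ∀ j, θ j ∈ Set.Ioo (0 : ℝ) (1 / 2))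
    (k : ℕ) : 0 < Theta θ k := Finset.prod_pos fun j _ => (hθ j).1

lemma side (hθ : ∀ j, θ j ∈ Set.Ioo (0 : ℝ) (1 / 2))
    {s : ℕ → Bool} {i : ℕ} {x : ℝ} (h : |x - cM θ s (i + 1)| ≤ Theta θ (i + 1) / 2) :
    (1 - 2 * θ i) * Theta θ i / 2 ≤ sgn (s i) * (x - cM θ s i) ∧
      |x - cM θ s i| ≤ Theta θ i / 2 := by
  have hT := Theta_pos hθ i
  have h0 := (hθ i).1
  have h1 := (hθ i).2
  have hm : 0 < Theta θ i * θ i := mul_pos hT h0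
  have hm2 : 0 < Theta θ i * (1 / 2 - θ i) := mul_pos hT (by linarith)
  rw [Theta_succ] at h
  have e : cM θ s (i + 1) = cM θ s i + sgn (s i) * (1 - θ i) * Theta θ i / 2 :=
    Finset.sum_range_succ _ _
  rw [e] at h
  rw [abs_le] at h ⊢
  obtain ⟨ha, hb⟩ := h
  cases hs : s i <;> simp only [hs, sgn, if_true, Bool.false_eq_true, if_false] at ha hb ⊢ <;>
    refine ⟨?_, ?_, ?_⟩ <;> nlinarith

lemma nest (hθ : ∀ j, θ j ∈ Set.Ioo (0 : ℝ) (1 / 2))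
    {s : ℕ → Bool} {k l : ℕ} (hkl : k ≤ l) {x : ℝ}
    (h : |x - cM θ s l| ≤ Theta θ l / 2) : |x - cM θ s k| ≤ Theta θ k / 2 := by
  induction l, hkl using Nat.le_induction with
  | base => exact h
  | succ l _ ih => exact ih (side hθ h).2

lemma sep (hθ : ∀ j, θ j ∈ Set.Ioo (0 : ℝ) (1 / 2))
    {s t : ℕ → Bool} {k l : ℕ} {x : ℝ} (hs : |x - cM θ s k| ≤ Theta θ k / 2)
    (ht : |x - cM θ t l| ≤ Theta θ l / 2) : ∀ i, i < k → i < l → s i = t i := by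
  intro i
  induction i using Nat.strong_induction_on with
  | _ i ih =>
    intro hk hl
    have hM : cM θ s i = cM θ t i := cM_congr θ fun j hj => ih j hj (by omega) (by omega)
    have h1 := (side hθ (nest hθ (Nat.succ_le_of_lt hk) hs)).1
    have h2 := (side hθ (nest hθ (Nat.succ_le_of_lt hl) ht)).1
    have hm2 : 0 < Theta θ i * (1 / 2 - θ i) :=
      mul_pos (Theta_pos hθ i) (by linarith [(hθ i).2])
    rw [hM] at h1
    cases hs : s i <;> cases ht : t i <;>
      simp only [hs, ht, sgn, if_true, Bool.false_eq_true, if_false] at h1 h2 ⊢ <;> nlinarith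

lemma black_white (hθ : ∀ j, θ j ∈ Set.Ioo (0 : ℝ) (1 / 2))
    {t : ℕ → Bool} {j : ℕ} {x : ℝ}
    (h : |x - cM θ t j| < (1 - 2 * θ j) * Theta θ j / 2) : |x - cM θ t j| ≤ Theta θ j / 2 := by
  nlinarith [mul_pos (Theta_pos hθ j) (hθ j).1]

lemma black_avoid (hθ : ∀ j, θ j ∈ Set.Ioo (0 : ℝ) (1 / 2))
    {s t : ℕ → Bool} {j k : ℕ} (hjk : j < k) {x : ℝ}
    (h : |x - cM θ t j| < (1 - 2 * θ j) * Theta θ j / 2)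
    (hs : |x - cM θ s k| ≤ Theta θ k / 2) : False := by
  have hM : cM θ s j = cM θ t j :=
    cM_congr θ fun i hi => sep hθ hs (black_white hθ h) i (by omega) hi
  have h1 := (side hθ (nest hθ (Nat.succ_le_of_lt hjk) hs)).1
  rw [hM] at h1
  rw [abs_lt] at h
  cases hs : s j <;>
    simp only [hs, sgn, if_true, Bool.false_eq_true, if_false] at h1 <;> linarith

lemma mem_white {k : ℕ} (σ : Fin k → Bool) (x : ℝ) :
    x ∈ whiteInterval θ σ ↔ |x - cM θ (extd σ) k| ≤ Theta θ k / 2 := by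
  rw [whiteInterval, cmid_eq, abs_le, Set.mem_Icc]
  constructor <;> rintro ⟨h1, h2⟩ <;> constructor <;> linarith

lemma mem_black {k : ℕ} (σ : Fin k → Bool) (x : ℝ) :
    x ∈ blackInterval θ σ ↔ |x - cM θ (extd σ) k| < (1 - 2 * θ k) * Theta θ k / 2 := by
  rw [blackInterval, cmid_eq, abs_lt, Set.mem_Ioo]
  constructor <;> rintro ⟨h1, h2⟩ <;> constructor <;> linarith

lemma inter_lt (hθ : ∀ j, θ j ∈ Set.Ioo (0 : ℝ) (1 / 2))
    {j k : ℕ} (hjk : j < k) (τ : Fin j → Bool) (σ : Fin k → Bool) :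
    blackInterval θ τ ∩ whiteInterval θ σ = ∅ := by
  ext x
  simp only [Set.mem_inter_iff, mem_white, mem_black, Set.mem_empty_iff_false, iff_false, not_and]
  exact fun h1 h2 => black_avoid hθ hjk h1 h2

lemma inter_ge (hθ : ∀ j, θ j ∈ Set.Ioo (0 : ℝ) (1 / 2))
    {k n : ℕ} (σ' σ : Fin k → Bool) (ρ : Fin n → Bool) :
    blackInterval θ (Fin.append σ' ρ) ∩ whiteInterval θ σ =
      if σ' = σ then blackInterval θ (Fin.append σ' ρ) else ∅ := by
  have key : ∀ i : Fin k, extd (Fin.append σ' ρ) i = σ' i := by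
    intro i
    have h : (i : ℕ) < k + n := by omega
    have : (⟨i, h⟩ : Fin (k + n)) = Fin.castAdd n i := rfl
    rw [extd, dif_pos h, this, Fin.append_left]
  split_ifs with hs
  · subst hs
    rw [Set.inter_eq_left]
    intro x hx
    rw [mem_black] at hx
    rw [mem_white]
    have := nest hθ (Nat.le_add_right k n) (black_white hθ hx)
    rwa [cM_congr θ (t := extd σ')] at this
    intro i hi
    rw [key ⟨i, hi⟩]; simp [extd, hi]
  · ext x
    simp only [Set.mem_inter_iff, mem_white, mem_black, Set.mem_empty_iff_false, iff_false, not_and]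
    intro h1 h2
    apply hs
    funext i
    have := sep hθ (black_white hθ h1) h2 i (by omega) i.2
    rw [key i] at this
    simpa [extd] using this

lemma vol_black (hθ : ∀ j, θ j ∈ Set.Ioo (0 : ℝ) (1 / 2))
    {j : ℕ} (τ : Fin j → Bool) :
    volume.real (blackInterval θ τ) = (1 - 2 * θ j) * Theta θ j := by
  have : 0 ≤ (1 - 2 * θ j) * Theta θ j :=
    mul_nonneg (by linarith [(hθ j).2]) (Theta_pos hθ j).le
  rw [blackInterval, Real.volume_real_Ioo_of_le (by linarith)]
  ring

lemma meas_black {j : ℕ} (τ : Fin j → Bool) : MeasurableSet (blackInterval θ τ) :=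
  measurableSet_Ioo

lemma int_ind {j k : ℕ} (τ : Fin j → Bool) (σ : Fin k → Bool) :
    Integrable ((blackInterval θ τ).indicator (1 : ℝ → ℝ))
      (volume.restrict (whiteInterval θ σ)) := by
  have : IsFiniteMeasure (volume.restrict (whiteInterval θ σ)) := by
    unfold whiteInterval; infer_instance
  exact (integrable_const (1 : ℝ)).indicator (meas_black τ)

lemma int_count {j k : ℕ} (σ : Fin k → Bool) :
    ∫ x in whiteInterval θ σ, ∑ τ : Fin j → Bool, (blackInterval θ τ).indicator (1 : ℝ → ℝ) x =
      ∑ τ : Fin j → Bool, volume.real (blackInterval θ τ ∩ whiteInterval θ σ) := by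
  rw [integral_finsetSum _ fun τ _ => int_ind τ σ]
  refine Finset.sum_congr rfl fun τ _ => ?_
  rw [integral_indicator_one (meas_black τ), measureReal_restrict_apply (meas_black τ)]

lemma int_count_lt (hθ : ∀ j, θ j ∈ Set.Ioo (0 : ℝ) (1 / 2))
    {j k : ℕ} (hjk : j < k) (σ : Fin k → Bool) :
    ∫ x in whiteInterval θ σ, ∑ τ : Fin j → Bool, (blackInterval θ τ).indicator (1 : ℝ → ℝ) x =
      0 := by
  rw [int_count]
  exact Finset.sum_eq_zero fun τ _ => by rw [inter_lt hθ hjk]; simp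

lemma int_count_ge (hθ : ∀ j, θ j ∈ Set.Ioo (0 : ℝ) (1 / 2))
    {n k : ℕ} (σ : Fin k → Bool) :
    ∫ x in whiteInterval θ σ, ∑ τ : Fin (k + n) → Bool,
      (blackInterval θ τ).indicator (1 : ℝ → ℝ) x =
      2 ^ n * ((1 - 2 * θ (k + n)) * Theta θ (k + n)) := by
  rw [int_count, ← (Fin.appendEquiv k n).sum_comp, Fintype.sum_prod_type]
  have : ∀ (σ' : Fin k → Bool) (ρ : Fin n → Bool),
      volume.real (blackInterval θ ((Fin.appendEquiv k n) (σ', ρ)) ∩ whiteInterval θ σ) =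
        if σ' = σ then (1 - 2 * θ (k + n)) * Theta θ (k + n) else 0 := by
    intro σ' ρ
    have e : (Fin.appendEquiv k n) (σ', ρ) = Fin.append σ' ρ := rfl
    rw [e, inter_ge hθ]
    split_ifs
    · exact vol_black hθ _
    · simp
  simp only [this]
  simp

lemma tele_summable (hθ : ∀ j, θ j ∈ Set.Ioo (0 : ℝ) (1 / 2))
    (k : ℕ) :
    Summable (fun n => 2 ^ n * ((1 - 2 * θ (k + n)) * Theta θ (k + n))) ∧
    ∑' n, 2 ^ n * ((1 - 2 * θ (k + n)) * Theta θ (k + n)) ≤ Theta θ k := by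
  have hnn : ∀ n, 0 ≤ 2 ^ n * ((1 - 2 * θ (k + n)) * Theta θ (k + n)) := fun n =>
    mul_nonneg (by positivity)
      (mul_nonneg (by linarith [(hθ (k + n)).2]) (Theta_pos hθ _).le)
  have hp : ∀ N, ∑ n ∈ Finset.range N, 2 ^ n * ((1 - 2 * θ (k + n)) * Theta θ (k + n)) =
      Theta θ k - 2 ^ N * Theta θ (k + N) := by
    intro N
    induction N with
    | zero => simp
    | succ N ih =>
      rw [Finset.sum_range_succ, ih, ← add_assoc, Theta_succ]
      ring
  have hb : ∀ N, ∑ n ∈ Finset.range N, 2 ^ n * ((1 - 2 * θ (k + n)) * Theta θ (k + n)) ≤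
      Theta θ k := by
    intro N
    rw [hp]
    have := Theta_pos hθ (k + N)
    have : 0 < 2 ^ N * Theta θ (k + N) := by positivity
    linarith
  exact ⟨summable_of_sum_range_le hnn hb, Real.tsum_le_of_sum_range_le hnn hb⟩

noncomputable def trm (θ : ℕ → ℝ) (S : Set ℕ) (k n : ℕ) : ℝ :=
  S.indicator (fun j => (-1 : ℝ) ^ j) (k + n) *
    (2 ^ n * ((1 - 2 * θ (k + n)) * Theta θ (k + n)))

lemma ind_le (S : Set ℕ) (j : ℕ) : ‖S.indicator (fun j => (-1 : ℝ) ^ j) j‖ ≤ 1 := by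
  by_cases h : j ∈ S <;> simp [h]

lemma trm_le (hθ : ∀ j, θ j ∈ Set.Ioo (0 : ℝ) (1 / 2))
    (S : Set ℕ) (k n : ℕ) :
    ‖trm θ S k n‖ ≤ 2 ^ n * ((1 - 2 * θ (k + n)) * Theta θ (k + n)) := by
  have hnn : 0 ≤ 2 ^ n * ((1 - 2 * θ (k + n)) * Theta θ (k + n)) :=
    mul_nonneg (by positivity)
      (mul_nonneg (by linarith [(hθ (k + n)).2]) (Theta_pos hθ _).le)
  rw [trm, norm_mul, Real.norm_of_nonneg hnn]
  exact mul_le_of_le_one_left hnn (ind_le S _)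

lemma trm_summable (hθ : ∀ j, θ j ∈ Set.Ioo (0 : ℝ) (1 / 2))
    (S : Set ℕ) (k : ℕ) : Summable (trm θ S k) :=
  Summable.of_norm_bounded (tele_summable hθ k).1 (trm_le hθ S k)

lemma tsum_trm_le (hθ : ∀ j, θ j ∈ Set.Ioo (0 : ℝ) (1 / 2))
    (S : Set ℕ) (k : ℕ) : |∑' n, trm θ S k n| ≤ Theta θ k :=
  (tsum_of_norm_bounded (tele_summable hθ k).1.hasSum (trm_le hθ S k)).trans (tele_summable hθ k).2

lemma tsum_trm_rec (hθ : ∀ j, θ j ∈ Set.Ioo (0 : ℝ) (1 / 2))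
    (S : Set ℕ) (k : ℕ) : ∑' n, trm θ S k n =
    S.indicator (fun j => (-1 : ℝ) ^ j) k * ((1 - 2 * θ k) * Theta θ k) +
      2 * ∑' n, trm θ S (k + 1) n := by
  rw [(trm_summable hθ S k).tsum_eq_zero_add, ← tsum_mul_left]
  congr 1
  · simp [trm]
  · refine tsum_congr fun n => ?_
    have : k + (n + 1) = k + 1 + n := by ring
    rw [trm, trm, this]
    ring

lemma integral_osc (hθ : ∀ j, θ j ∈ Set.Ioo (0 : ℝ) (1 / 2))
    (S : Set ℕ) {k : ℕ} (σ : Fin k → Bool) :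
    ∫ x in whiteInterval θ σ, oscFun θ S x = ∑' n, trm θ S k n := by
  set c : ℕ → ℝ := S.indicator (fun j => (-1 : ℝ) ^ j) with hc
  set N : ℕ → ℝ → ℝ := fun j x => ∑ τ : Fin j → Bool, (blackInterval θ τ).indicator 1 x with hN
  have hosc : ∀ x, oscFun θ S x = ∑' j, c j * N j x := by
    intro x
    refine tsum_congr fun j => ?_
    by_cases h : j ∈ S <;> simp [hc, hN, h]
  have hNn : ∀ j x, 0 ≤ N j x := fun j x =>
    Finset.sum_nonneg fun τ _ => Set.indicator_nonneg (fun _ _ => zero_le_one) _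
  have hNi : ∀ j, Integrable (N j) (volume.restrict (whiteInterval θ σ)) := fun j =>
    integrable_finsetSum _ fun τ _ => int_ind τ σ
  have hNs : Summable fun j => ∫ x in whiteInterval θ σ, N j x := by
    rw [← summable_nat_add_iff k]
    refine (tele_summable hθ k).1.congr fun n => ?_
    rw [add_comm n k]
    exact (int_count_ge hθ σ).symm
  have hs := hasSum_integral_of_summable_integral_norm (F := fun j x => c j * N j x)
    (μ := volume.restrict (whiteInterval θ σ)) (fun j => (hNi j).const_mul _) (by
      refine Summable.of_nonneg_of_le (fun j => integral_nonneg fun x => norm_nonneg _)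
        (fun j => ?_) hNs
      refine integral_mono ((hNi j).const_mul _).norm (hNi j) fun x => ?_
      simp only [norm_mul, Real.norm_of_nonneg (hNn j x)]
      exact mul_le_of_le_one_left (hNn j x) (ind_le S j))
  simp only [hosc]
  rw [← hs.tsum_eq, ← hs.summable.sum_add_tsum_nat_add k, Finset.sum_eq_zero, zero_add]
  · refine tsum_congr fun n => ?_
    rw [integral_const_mul, trm, add_comm n k]
    congr 1
    exact int_count_ge hθ σ
  · intro j hj
    rw [integral_const_mul]
    have : ∫ x in whiteInterval θ σ, N j x = 0 := int_count_lt hθ (Finset.mem_range.1 hj) σ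
    rw [this, mul_zero]

lemma black_unique (hθ : ∀ j, θ j ∈ Set.Ioo (0 : ℝ) (1 / 2))
    {j : ℕ} {τ τ' : Fin j → Bool} {x : ℝ} (h : x ∈ blackInterval θ τ)
    (h' : x ∈ blackInterval θ τ') : τ = τ' := by
  rw [mem_black] at h h'
  funext i
  have := sep hθ (black_white hθ h) (black_white hθ h') i i.2 i.2
  simpa [extd] using this

lemma black_unique_gen (hθ : ∀ j, θ j ∈ Set.Ioo (0 : ℝ) (1 / 2))
    {j j' : ℕ} {τ : Fin j → Bool} {τ' : Fin j' → Bool} {x : ℝ}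
    (h : x ∈ blackInterval θ τ) (h' : x ∈ blackInterval θ τ') : j = j' := by
  rw [mem_black] at h h'
  rcases lt_trichotomy j j' with hl | hl | hl
  · exact (black_avoid hθ hl h (black_white hθ h')).elim
  · exact hl
  · exact (black_avoid hθ hl h' (black_white hθ h)).elim

lemma osc_pointwise (hθ : ∀ j, θ j ∈ Set.Ioo (0 : ℝ) (1 / 2))
    (S : Set ℕ) (x : ℝ) :
    Summable (fun j => S.indicator (fun j => (-1 : ℝ) ^ j *
      ∑ τ : Fin j → Bool, (blackInterval θ τ).indicator 1 x) j) ∧ ‖oscFun θ S x‖ ≤ 1 := by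
  by_cases hx : ∃ (j : ℕ) (τ : Fin j → Bool), x ∈ blackInterval θ τ
  · obtain ⟨j, τ, hτ⟩ := hx
    have hz : ∀ i, i ≠ j → S.indicator (fun j => (-1 : ℝ) ^ j *
        ∑ τ : Fin j → Bool, (blackInterval θ τ).indicator 1 x) i = 0 := by
      intro i hi
      have : ∑ τ : Fin i → Bool, (blackInterval θ τ).indicator (1 : ℝ → ℝ) x = 0 :=
        Finset.sum_eq_zero fun τ' _ => Set.indicator_of_notMem
          (fun h => hi (black_unique_gen hθ h hτ)) _
      by_cases h : i ∈ S <;> simp [h, this]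
    have hs := hasSum_single j hz
    refine ⟨hs.summable, ?_⟩
    rw [oscFun, hs.tsum_eq]
    have h1 : ∑ τ : Fin j → Bool, (blackInterval θ τ).indicator (1 : ℝ → ℝ) x = 1 := by
      rw [Finset.sum_eq_single τ]
      · simp [hτ]
      · intro τ' _ hne
        exact Set.indicator_of_notMem (fun h => hne (black_unique hθ h hτ)) _
      · simp
    by_cases h : j ∈ S <;> simp [h, h1]
  · push Not at hx
    have : ∀ i, S.indicator (fun j => (-1 : ℝ) ^ j *
        ∑ τ : Fin j → Bool, (blackInterval θ τ).indicator 1 x) i = 0 := by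
      intro i
      have : ∑ τ : Fin i → Bool, (blackInterval θ τ).indicator (1 : ℝ → ℝ) x = 0 :=
        Finset.sum_eq_zero fun τ' _ => Set.indicator_of_notMem (hx i τ') _
      by_cases h : i ∈ S <;> simp [h, this]
    rw [oscFun]
    simp only [this]
    simp [summable_zero]

lemma osc_measurable (hθ : ∀ j, θ j ∈ Set.Ioo (0 : ℝ) (1 / 2))
    (S : Set ℕ) : Measurable (oscFun θ S) := by
  refine measurable_of_tendsto_metrizable (f := fun n x => ∑ j ∈ Finset.range n,
    S.indicator (fun j => (-1 : ℝ) ^ j *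
      ∑ τ : Fin j → Bool, (blackInterval θ τ).indicator 1 x) j) (fun n => ?_) ?_
  · refine Finset.measurable_fun_sum _ fun j _ => ?_
    by_cases h : j ∈ S
    · simp only [Set.indicator_of_mem h]
      exact (Finset.measurable_fun_sum _ fun τ _ =>
        measurable_one.indicator (meas_black τ)).const_mul _
    · simp only [Set.indicator_of_notMem h]
      exact measurable_const
  · rw [tendsto_pi_nhds]
    exact fun x => (osc_pointwise hθ S x).1.hasSum.tendsto_sum_nat

lemma integral_osc_sub (hθ : ∀ j, θ j ∈ Set.Ioo (0 : ℝ) (1 / 2))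
    (S : Set ℕ) {k : ℕ} (σ : Fin k → Bool) (c : ℝ) :
    ∫ x in whiteInterval θ σ, (oscFun θ S x - c) = ∑' n, trm θ S k n - Theta θ k * c := by
  have : IsFiniteMeasure (volume.restrict (whiteInterval θ σ)) := by
    unfold whiteInterval; infer_instance
  have hi : Integrable (oscFun θ S) (volume.restrict (whiteInterval θ σ)) :=
    Integrable.of_bound (osc_measurable hθ S).aestronglyMeasurable 1
      (Filter.Eventually.of_forall fun x => (osc_pointwise hθ S x).2)
  rw [integral_sub hi (integrable_const c), integral_osc hθ, setIntegral_const]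
  have hT := Theta_pos hθ k
  rw [whiteInterval, Real.volume_real_Icc_of_le (by linarith), smul_eq_mul]
  ring

end

end OscAux

/-- (a) The average of `g^{(1)}` over a white interval of generation `k` does not depend on the
choice of white interval; (b) if `k ∈ S` and `k+1 ∈ S`, then the averages of `g^{(1)}` over
white intervals of consecutive generations `k` and `k+1` differ by at least
`2 (1-2θ_k)(1-2θ_{k+1})`. -/
theorem oscFun_average_eq_and_average_gap
    (θ : ℕ → ℝ) (hθ : ∀ j, θ j ∈ Set.Ioo (0 : ℝ) (1 / 2)) (S : Set ℕ) :
    (∀ (k : ℕ) (σ σ' : Fin k → Bool),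
      (1 / Theta θ k) * ∫ x in whiteInterval θ σ, oscFun θ S x =
        (1 / Theta θ k) * ∫ x in whiteInterval θ σ', oscFun θ S x) ∧
    (∀ k : ℕ, k ∈ S → k + 1 ∈ S →
      ∀ (σ : Fin k → Bool) (σ' : Fin (k + 1) → Bool),
        2 * (1 - 2 * θ k) * (1 - 2 * θ (k + 1)) ≤
          |(1 / Theta θ k) * ∫ x in whiteInterval θ σ, oscFun θ S x -
            (1 / Theta θ (k + 1)) * ∫ x in whiteInterval θ σ', oscFun θ S x|) := by
  refine ⟨fun k σ σ' => by rw [OscAux.integral_osc hθ, OscAux.integral_osc hθ], ?_⟩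
  intro k hk hk1 σ σ'
  have hT0 := (OscAux.Theta_pos hθ k).ne'
  rw [OscAux.integral_osc hθ S σ', OscAux.integral_osc_sub hθ S σ, mul_sub (1 / Theta θ k),
    ← mul_assoc (1 / Theta θ k) (Theta θ k), one_div_mul_cancel hT0, one_mul,
    OscAux.tsum_trm_rec hθ S k,
    OscAux.tsum_trm_rec hθ S (k + 1)]
  have hb := OscAux.tsum_trm_le hθ S (k + 1 + 1)
  have hT := OscAux.Theta_pos hθ k
  have h0 := hθ k
  have h1 := hθ (k + 1)
  rw [OscAux.Theta_succ, OscAux.Theta_succ] at hb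
  rw [OscAux.Theta_succ, Set.indicator_of_mem hk, Set.indicator_of_mem hk1]
  generalize ∑' n, OscAux.trm θ S (k + 1 + 1) n = V at *
  generalize Theta θ k = T at *
  generalize θ k = a at *
  generalize θ (k + 1) = b at *
  obtain ⟨ha0, ha1⟩ := h0
  obtain ⟨hb0, hb1⟩ := h1
  have hpos : 0 < T * a * b := by positivity
  obtain ⟨v, rfl⟩ : ∃ v, V = T * a * b * v := ⟨V / (T * a * b), by field_simp⟩
  have hv : |v| ≤ 1 := by
    rw [abs_mul, abs_of_pos hpos] at hb
    exact le_of_mul_le_mul_left (by linarith) hpos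
  have e : 1 / T * ((-1 : ℝ) ^ k * ((1 - 2 * a) * T) +
        2 * ((-1 : ℝ) ^ (k + 1) * ((1 - 2 * b) * (T * a)) + 2 * (T * a * b * v))) -
      1 / (T * a) * ((-1 : ℝ) ^ (k + 1) * ((1 - 2 * b) * (T * a)) + 2 * (T * a * b * v)) =
      (1 - 2 * a) * ((-1 : ℝ) ^ k * (2 - 2 * b) - 2 * b * v) := by
    rw [pow_succ]
    field_simp
    ring
  rw [e, abs_mul, abs_of_pos (by linarith : 0 < 1 - 2 * a)]
  have h2 : 2 * (1 - 2 * b) ≤ |(-1 : ℝ) ^ k * (2 - 2 * b) - 2 * b * v| := by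
    have h3 := abs_sub_abs_le_abs_sub ((-1 : ℝ) ^ k * (2 - 2 * b)) (2 * b * v)
    rw [abs_mul, abs_mul (2 * b), abs_pow, abs_neg, abs_one, one_pow,
      abs_of_pos (by linarith : 0 < 2 - 2 * b), abs_of_pos (by linarith : 0 < 2 * b)] at h3
    nlinarith
  nlinarith
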